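/- With two voters, the weighted deviation D_w(S, P) = Σ_k Σ_i p_i |C_i(S) - C_i(P_k)| is also minimized by returning either of the two preferred schedules P_1 or P_2. -/

import Mathlib

/-- Completion time of task `i` in schedule `S`. -/
noncomputable def completionTime {n : ℕ} (p : Fin n → ℝ) (S : Equiv.Perm (Fin n))
    (i : Fin n) : ℝ :=
  ∑ j ∈ Finset.univ.filter (fun j => S j ≤ S i), p j

/-- Weighted total deviation of `S` with respect to the two-voter profile
`{P1, P2}`: each task's deviation is multiplied by its processing time. -/
noncomputable def wdev2 {n : ℕ} (p : Fin n → ℝ) (S P1 P2 : Equiv.Perm (Fin n)) : ℝ :=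
  ∑ i, p i * (|completionTime p S i - completionTime p P1 i| +
              |completionTime p S i - completionTime p P2 i|)

/-- With two voters, the weighted deviation is also minimized by returning
either of the two preferred schedules. -/
theorem two_voters_weighted_pref_optimal (n : ℕ) (p : Fin n → ℝ)
    (hp : ∀ i, 0 < p i) (P1 P2 : Equiv.Perm (Fin n)) :
    ∀ S : Equiv.Perm (Fin n),
      wdev2 p P1 P1 P2 ≤ wdev2 p S P1 P2 ∧ wdev2 p P2 P1 P2 ≤ wdev2 p S P1 P2 := by
  intro S
  constructor
  · unfold wdev2
    refine Finset.sum_le_sum fun i _ => mul_le_mul_of_nonneg_left ?_ (hp i).le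
    rw [sub_self, abs_zero, zero_add, abs_sub_comm (completionTime p S i) (completionTime p P1 i)]
    exact abs_sub_le _ _ _
  · unfold wdev2
    refine Finset.sum_le_sum fun i _ => mul_le_mul_of_nonneg_left ?_ (hp i).le
    rw [sub_self, abs_zero, add_zero,
      abs_sub_comm (completionTime p S i) (completionTime p P2 i), add_comm]
    rw [abs_sub_comm (completionTime p P2 i) (completionTime p P1 i),
      abs_sub_comm (completionTime p S i) (completionTime p P1 i), add_comm,
      abs_sub_comm (completionTime p P2 i) (completionTime p S i)]
    exact abs_sub_le _ _ _
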